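/- arXiv:2601.18052 — 7 statements merged into one kernel-verified Lean document; each statement's English description precedes it below -/
import Mathlib

section
/- Let N ≥ 1, P ≥ 1, let D_j : ℝ^N → ℝ^{m_j} for j = 0, …, P be linear maps, and let λ_j > 0. Then the block matrix H is invertible if and only if the subspaces ker D_0, ker D_1, …, ker D_P of ℝ^N are linearly independent, i.e. Σ_{j=0}^P dim ker D_j = dim(ker D_0 + ker D_1 + ⋯ + ker D_P). -/
/-!
Write `v = (v_0, …, v_P)` for a vector of `ℝ^{(P+1)N}` and `s = ∑ v_i`. The `j`-th block of `H v` is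
`s + λ_j D_jᵀ D_j v_j`, so `v ⬝ H v = ‖s‖² + ∑ λ_j ‖D_j v_j‖²`. All terms are nonnegative, hence
`H v = 0` exactly when `∑ v_j = 0` and `v_j ∈ ker D_j` for every `j` (`blockH_mulVec_eq_zero_iff`).
Thus `H` is invertible iff the summation map `∏ ker D_j → ℝ^N` is injective. The range of that map
is the sum of the kernels, so by rank-nullity injectivity is the equality of dimensions
(`sum_finrank_eq_iff`).
-/

open Matrix

noncomputable def blockH {N : ℕ} (P : ℕ) (L : Fin (P + 1) → Matrix (Fin N) (Fin N) ℝ)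
    (lam : Fin (P + 1) → ℝ) :
    Matrix (Fin (P + 1) × Fin N) (Fin (P + 1) × Fin N) ℝ :=
  fun p q =>
    if p.1 = q.1 then ((1 : Matrix (Fin N) (Fin N) ℝ) + lam p.1 • L p.1) p.2 q.2
    else if p.2 = q.2 then 1 else 0

/-- The dimension count for independence: the summation map `∏ W_j → V` has range `⨆ W_j`, so by
rank-nullity the dimensions agree exactly when its kernel is trivial. -/
theorem sum_finrank_eq_iff {ι V : Type*} [Fintype ι] [DecidableEq ι] [AddCommGroup V] [Module ℝ V]
    [FiniteDimensional ℝ V] (W : ι → Submodule ℝ V) :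
    ∑ j, Module.finrank ℝ (W j) = Module.finrank ℝ ↥(⨆ j, W j) ↔
      ∀ v : ι → V, (∀ j, v j ∈ W j) → ∑ j, v j = 0 → v = 0 := by
  let S : (∀ j, W j) →ₗ[ℝ] V := LinearMap.lsum ℝ (fun j => W j) ℝ (fun j => (W j).subtype)
  have hS : ∀ w, S w = ∑ j, (w j : V) := fun w => by simp [S]
  have hrange : LinearMap.range S = ⨆ j, W j := by
    apply le_antisymm
    · rintro _ ⟨w, rfl⟩
      rw [hS]
      exact Submodule.sum_mem _ fun j _ => Submodule.mem_iSup_of_mem j (w j).2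
    · refine iSup_le fun j x hx => ⟨Pi.single j ⟨x, hx⟩, ?_⟩
      rw [hS, Finset.sum_eq_single j]
      · simp
      · intro i _ hi
        simp [Pi.single_eq_of_ne hi]
      · simp
  have hrn := LinearMap.finrank_range_add_finrank_ker S
  rw [hrange, Module.finrank_pi_fintype] at hrn
  have hker : ∑ j, Module.finrank ℝ (W j) = Module.finrank ℝ ↥(⨆ j, W j) ↔
      LinearMap.ker S = ⊥ := by
    rw [← Submodule.finrank_eq_zero (R := ℝ)]
    omega
  rw [hker, LinearMap.ker_eq_bot']
  constructor
  · intro h v hv hsum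
    have := h (fun j => ⟨v j, hv j⟩) (by rw [hS]; exact hsum)
    funext j
    exact congrArg Subtype.val (congrFun this j)
  · intro h w hw
    rw [hS] at hw
    have := h (fun j => (w j : V)) (fun j => (w j).2) hw
    funext j
    exact Subtype.ext (congrFun this j)

theorem blockH_mulVec_apply {N P : ℕ} (L : Fin (P + 1) → Matrix (Fin N) (Fin N) ℝ)
    (lam : Fin (P + 1) → ℝ) (v : Fin (P + 1) → Fin N → ℝ) (j : Fin (P + 1)) (n : Fin N) :
    (blockH P L lam *ᵥ fun p => v p.1 p.2) (j, n) =
      ((∑ i, v i) + lam j • (L j *ᵥ v j)) n := by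
  have hentry : ∀ i k, blockH P L lam (j, n) (i, k) =
      (if n = k then 1 else 0) + if j = i then lam j * L j n k else 0 := by
    intro i k
    by_cases h : j = i <;> simp [blockH, h, Matrix.one_apply]
  simp [Matrix.mulVec, dotProduct, Fintype.sum_prod_type, hentry, add_mul, Finset.sum_add_distrib,
    ite_mul, Finset.mul_sum, mul_assoc]

theorem blockH_mulVec_eq_zero_iff {N P : ℕ} {m : Fin (P + 1) → ℕ}
    (D : ∀ j : Fin (P + 1), Matrix (Fin (m j)) (Fin N) ℝ)
    (lam : Fin (P + 1) → ℝ) (hlam : ∀ j, 0 < lam j) (v : Fin (P + 1) → Fin N → ℝ) :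
    (blockH P (fun j => (D j)ᵀ * D j) lam *ᵥ fun p => v p.1 p.2) = 0 ↔
      (∀ j, D j *ᵥ v j = 0) ∧ ∑ j, v j = 0 := by
  have hblock : (blockH P (fun j => (D j)ᵀ * D j) lam *ᵥ fun p => v p.1 p.2) = 0 ↔
      ∀ j, (∑ i, v i) + lam j • (((D j)ᵀ * D j) *ᵥ v j) = 0 := by
    simp only [funext_iff, Prod.forall, blockH_mulVec_apply, Pi.zero_apply]
  rw [hblock]
  constructor
  · intro h
    have hnn : ∀ {k : ℕ} (x : Fin k → ℝ), 0 ≤ x ⬝ᵥ x := fun x =>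
      Finset.sum_nonneg fun i _ => mul_self_nonneg (x i)
    have hterm : ∀ j, 0 ≤ lam j * ((D j *ᵥ v j) ⬝ᵥ (D j *ᵥ v j)) := fun j =>
      mul_nonneg (hlam j).le (hnn _)
    have hj : ∀ j, v j ⬝ᵥ (∑ i, v i) + lam j * ((D j *ᵥ v j) ⬝ᵥ (D j *ᵥ v j)) = 0 := by
      intro j
      have := congrArg (fun x => v j ⬝ᵥ x) (h j)
      simpa [dotProduct_add, dotProduct_smul, ← Matrix.mulVec_mulVec, Matrix.dotProduct_mulVec,
        Matrix.vecMul_transpose] using this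
    -- Summing over `j` gives the quadratic form of `H` at `v`.
    have hquad : (∑ i, v i) ⬝ᵥ (∑ i, v i) +
        ∑ j, lam j * ((D j *ᵥ v j) ⬝ᵥ (D j *ᵥ v j)) = 0 := by
      rw [sum_dotProduct, ← Finset.sum_add_distrib]
      exact Finset.sum_eq_zero fun j _ => hj j
    have hsum := Finset.sum_nonneg fun j (_ : j ∈ Finset.univ) => hterm j
    have hs := hnn (∑ i, v i)
    have hD : ∑ j, lam j * ((D j *ᵥ v j) ⬝ᵥ (D j *ᵥ v j)) = 0 := by linarith
    rw [Finset.sum_eq_zero_iff_of_nonneg fun j _ => hterm j] at hD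
    refine ⟨fun j => ?_, dotProduct_self_eq_zero.1 (by linarith)⟩
    exact dotProduct_self_eq_zero.1
      ((mul_eq_zero.1 (hD j (Finset.mem_univ j))).resolve_left (hlam j).ne')
  · rintro ⟨hD, hs⟩ j
    simp [hs, ← Matrix.mulVec_mulVec, hD j]

/-- **Identifiability Condition.** The block matrix `H` is invertible iff the kernels of
`D_0, …, D_P` are linearly independent subspaces, i.e. the sum of their dimensions equals the
dimension of their sum. -/
theorem blockH_isUnit_iff (N P : ℕ) (hN : 1 ≤ N) (hP : 1 ≤ P)
    (m : Fin (P + 1) → ℕ)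
    (D : ∀ j : Fin (P + 1), Matrix (Fin (m j)) (Fin N) ℝ)
    (lam : Fin (P + 1) → ℝ) (hlam : ∀ j, 0 < lam j) :
    IsUnit (blockH P (fun j => (D j)ᵀ * D j) lam) ↔
      ∑ j : Fin (P + 1), Module.finrank ℝ (LinearMap.ker (D j).mulVecLin) =
        Module.finrank ℝ ↥(⨆ j : Fin (P + 1), LinearMap.ker (D j).mulVecLin) := by
  rw [sum_finrank_eq_iff, ← Matrix.mulVec_injective_iff_isUnit, ← Matrix.coe_mulVecLin,
    ← LinearMap.ker_eq_bot, LinearMap.ker_eq_bot']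
  simp only [LinearMap.mem_ker, Matrix.mulVecLin_apply]
  constructor
  · intro h v hv hs
    have := h _ ((blockH_mulVec_eq_zero_iff D lam hlam v).2 ⟨hv, hs⟩)
    funext j n
    exact congrFun this (j, n)
  · intro h v hv
    obtain ⟨hD, hs⟩ := (blockH_mulVec_eq_zero_iff D lam hlam fun j n => v (j, n)).1 hv
    have := h _ hD hs
    funext p
    exact congrFun (congrFun this p.1) p.2
end

section
/- Let N ≥ 1, P ≥ 1, let D_j : ℝ^N → ℝ^{m_j} for j = 0, …, P be linear maps, let λ_j > 0, and let Y ∈ ℝ^N. Then the penalized objective F attains its minimum on (ℝ^N)^{P+1}; a point (x_0, …, x_P) minimizes F if and only if H (x_0; x_1; …; x_P) = (Y; Y; …; Y) (the stacked vector with P+1 copies of Y); and F has a unique minimizer if and only if H is invertible. -/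
/-!
The objective is a convex quadratic. Write `b = (Y; …; Y)` and
`q h = ‖∑ j, h j‖² + ∑ j, λ_j ‖D_j h_j‖²`. Then `hᵀ H h = q h ≥ 0` and
`F (x + h) = F x + 2 (H x - b)ᵀ h + q h` (`objF_add`), so solutions of `H x = b` are minimizers, and
conversely a minimizer has vanishing gradient, as a short step along `-(H x - b)` shows.

The normal equations are always solvable: otherwise some `w` is orthogonal to the range of `H` but
not to `b`. Then `wᵀ H w = q w = 0` forces `∑ j, w j = 0`, whence `wᵀ b = Yᵀ (∑ j, w j) = 0`, a
contradiction. Minimizers thus form the nonempty solution set of `H x = b`, which is a single point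
exactly when `H` has trivial kernel.
-/

open Matrix

/-- The penalized objective `F(x_0,…,x_P) = ‖Y − Σ_j x_j‖₂² + Σ_j λ_j ‖D_j x_j‖₂²`. -/
noncomputable def objF {N : ℕ} (P : ℕ) (m : Fin (P + 1) → ℕ)
    (D : ∀ j : Fin (P + 1), Matrix (Fin (m j)) (Fin N) ℝ)
    (lam : Fin (P + 1) → ℝ) (Y : Fin N → ℝ) (x : Fin (P + 1) → Fin N → ℝ) : ℝ :=
  (Y - ∑ j, x j) ⬝ᵥ (Y - ∑ j, x j) + ∑ j, lam j * ((D j *ᵥ x j) ⬝ᵥ (D j *ᵥ x j))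

/-- The homogeneous quadratic part of the objective, `‖∑ h_j‖² + ∑ λ_j ‖D_j h_j‖²`. -/
noncomputable def quadPart {N : ℕ} (P : ℕ) (m : Fin (P + 1) → ℕ)
    (D : ∀ j : Fin (P + 1), Matrix (Fin (m j)) (Fin N) ℝ)
    (lam : Fin (P + 1) → ℝ) (h : Fin (P + 1) → Fin N → ℝ) : ℝ :=
  (∑ j, h j) ⬝ᵥ (∑ j, h j) + ∑ j, lam j * ((D j *ᵥ h j) ⬝ᵥ (D j *ᵥ h j))

section

variable {N P : ℕ} {m : Fin (P + 1) → ℕ} {D : ∀ j : Fin (P + 1), Matrix (Fin (m j)) (Fin N) ℝ}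
  {lam : Fin (P + 1) → ℝ}

lemma dotProduct_self_nonneg_real {ι : Type*} [Fintype ι] (v : ι → ℝ) : 0 ≤ v ⬝ᵥ v :=
  Finset.sum_nonneg fun i _ => mul_self_nonneg (v i)

lemma penalty_nonneg (hlam : ∀ j, 0 < lam j) (h : Fin (P + 1) → Fin N → ℝ) :
    0 ≤ ∑ j, lam j * ((D j *ᵥ h j) ⬝ᵥ (D j *ᵥ h j)) :=
  Finset.sum_nonneg fun j _ => mul_nonneg (hlam j).le (dotProduct_self_nonneg_real _)

lemma quadPart_nonneg (hlam : ∀ j, 0 < lam j) (h : Fin (P + 1) → Fin N → ℝ) :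
    0 ≤ quadPart P m D lam h :=
  add_nonneg (dotProduct_self_nonneg_real _) (penalty_nonneg hlam h)

lemma sum_eq_zero_of_quadPart (hlam : ∀ j, 0 < lam j) (h : Fin (P + 1) → Fin N → ℝ)
    (hq : quadPart P m D lam h = 0) : ∑ j, h j = 0 := by
  have h1 := dotProduct_self_nonneg_real (∑ j, h j)
  have h2 := penalty_nonneg (D := D) hlam h
  unfold quadPart at hq
  exact dotProduct_self_eq_zero.mp (by linarith)

lemma quadPart_smul (t : ℝ) (h : Fin (P + 1) → Fin N → ℝ) :
    quadPart P m D lam (t • h) = t ^ 2 * quadPart P m D lam h := by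
  simp only [quadPart, Pi.smul_apply, ← Finset.smul_sum, mulVec_smul, smul_dotProduct,
    dotProduct_smul, smul_eq_mul, mul_add, Finset.mul_sum]
  congr 1
  · ring
  · exact Finset.sum_congr rfl fun j _ => by ring

/-- Block row `j` of `H x` is `∑ k, x k + λ_j D_jᵀ D_j x_j`. -/
lemma blockH_mulVec (x : Fin (P + 1) → Fin N → ℝ) (p : Fin (P + 1) × Fin N) :
    (blockH P (fun j => (D j)ᵀ * D j) lam *ᵥ (fun p => x p.1 p.2)) p =
      (∑ k, x k) p.2 + lam p.1 * ((D p.1)ᵀ *ᵥ (D p.1 *ᵥ x p.1)) p.2 := by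
  obtain ⟨j, i⟩ := p
  have key : ∀ k l, blockH P (fun j => (D j)ᵀ * D j) lam (j, i) (k, l) =
      (if i = l then 1 else 0) + if j = k then lam j * ((D j)ᵀ * D j) i l else 0 := by
    intro k l
    by_cases hk : j = k <;> simp [blockH, hk, Matrix.one_apply]
  rw [mulVec_mulVec]
  simp only [mulVec, dotProduct, Fintype.sum_prod_type, key, add_mul, Finset.sum_add_distrib,
    ite_mul, one_mul, zero_mul, Finset.sum_ite_eq, Finset.mem_univ, if_true, Finset.sum_apply]
  congr 1
  rw [Finset.sum_eq_single j]
  · simp [Finset.mul_sum, mul_assoc]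
  · intro k _ hk
    simp [hk.symm]
  · simp

/-- The bilinear form of `H`. -/
lemma blockH_bilin (x h : Fin (P + 1) → Fin N → ℝ) :
    (blockH P (fun j => (D j)ᵀ * D j) lam *ᵥ (fun p => x p.1 p.2)) ⬝ᵥ (fun p => h p.1 p.2) =
      (∑ j, x j) ⬝ᵥ (∑ j, h j) + ∑ j, lam j * ((D j *ᵥ x j) ⬝ᵥ (D j *ᵥ h j)) := by
  have e : ∀ j, (D j *ᵥ x j) ⬝ᵥ (D j *ᵥ h j) = ((D j)ᵀ *ᵥ (D j *ᵥ x j)) ⬝ᵥ h j := by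
    intro j
    rw [dotProduct_mulVec, mulVec_transpose]
  simp only [e, dotProduct_sum]
  rw [← Finset.sum_add_distrib]
  simp only [dotProduct, blockH_mulVec, Fintype.sum_prod_type, add_mul, Finset.sum_add_distrib,
    Finset.mul_sum, mul_assoc]

lemma const_dotProduct (Y : Fin N → ℝ) (h : Fin (P + 1) → Fin N → ℝ) :
    (fun p : Fin (P + 1) × Fin N => Y p.2) ⬝ᵥ (fun p => h p.1 p.2) = Y ⬝ᵥ ∑ j, h j := by
  rw [dotProduct_sum]
  simp only [dotProduct, Fintype.sum_prod_type]

/-- The exact second-order expansion of the objective, with gradient `2 (H x - (Y; …; Y))`. -/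
lemma objF_add (Y : Fin N → ℝ) (x h : Fin (P + 1) → Fin N → ℝ) :
    objF P m D lam Y (x + h) = objF P m D lam Y x +
      2 * ((blockH P (fun j => (D j)ᵀ * D j) lam *ᵥ (fun p => x p.1 p.2) -
        fun p : Fin (P + 1) × Fin N => Y p.2) ⬝ᵥ (fun p => h p.1 p.2)) +
      quadPart P m D lam h := by
  rw [sub_dotProduct, blockH_bilin, const_dotProduct]
  have e : ∀ j, lam j * ((D j *ᵥ (x + h) j) ⬝ᵥ (D j *ᵥ (x + h) j)) =
      lam j * ((D j *ᵥ x j) ⬝ᵥ (D j *ᵥ x j)) + 2 * (lam j * ((D j *ᵥ x j) ⬝ᵥ (D j *ᵥ h j))) +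
        lam j * ((D j *ᵥ h j) ⬝ᵥ (D j *ᵥ h j)) := by
    intro j
    rw [Pi.add_apply, mulVec_add, add_dotProduct, dotProduct_add, dotProduct_add,
      dotProduct_comm (D j *ᵥ h j) (D j *ᵥ x j)]
    ring
  simp only [objF, quadPart, e, Finset.sum_add_distrib, ← Finset.mul_sum]
  simp only [Pi.add_apply, Finset.sum_add_distrib]
  generalize ∑ j, x j = s
  generalize ∑ j, h j = r
  simp only [sub_dotProduct, dotProduct_sub, add_dotProduct, dotProduct_add,
    dotProduct_comm s Y, dotProduct_comm r Y, dotProduct_comm r s]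
  ring

lemma isMin_iff (hlam : ∀ j, 0 < lam j) (Y : Fin N → ℝ) (x : Fin (P + 1) → Fin N → ℝ) :
    (∀ z, objF P m D lam Y x ≤ objF P m D lam Y z) ↔
      (blockH P (fun j => (D j)ᵀ * D j) lam) *ᵥ (fun p => x p.1 p.2) =
        (fun p : Fin (P + 1) × Fin N => Y p.2) := by
  constructor
  · intro hx
    set g := (blockH P (fun j => (D j)ᵀ * D j) lam) *ᵥ (fun p => x p.1 p.2) -
      (fun p : Fin (P + 1) × Fin N => Y p.2) with hg
    let γ : Fin (P + 1) → Fin N → ℝ := fun j i => g (j, i)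
    have hq := quadPart_nonneg (D := D) hlam γ
    have ha := dotProduct_self_nonneg_real g
    have step : ∀ t : ℝ, 0 ≤ -(2 * t * (g ⬝ᵥ g)) + t ^ 2 * quadPart P m D lam γ := by
      intro t
      have h1 := hx (x + (-t) • γ)
      rw [objF_add, ← hg, quadPart_smul] at h1
      have h2 : (fun p : Fin (P + 1) × Fin N => ((-t) • γ) p.1 p.2) = (-t) • g := rfl
      rw [h2, dotProduct_smul, smul_eq_mul] at h1
      linarith
    have hz : g ⬝ᵥ g = 0 := by
      generalize g ⬝ᵥ g = a at *
      generalize quadPart P m D lam γ = q at *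
      -- The step length `a / (q + 1)` is short enough for the linear term to dominate.
      have h1 := step (a / (q + 1))
      have h2 : -(2 * (a / (q + 1)) * a) + (a / (q + 1)) ^ 2 * q =
          -(a ^ 2 * ((q + 2) / (q + 1) ^ 2)) := by
        field_simp
        ring
      rw [h2] at h1
      have h3 : 0 < (q + 2) / (q + 1) ^ 2 := by positivity
      have h4 : a ^ 2 ≤ 0 := by
        by_contra! hc
        have := mul_pos hc h3
        linarith
      exact pow_eq_zero_iff two_ne_zero |>.mp (le_antisymm h4 (sq_nonneg a))
    exact sub_eq_zero.mp (dotProduct_self_eq_zero.mp hz)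
  · intro hx z
    have h1 := objF_add (D := D) (lam := lam) Y x (z - x)
    rw [hx, sub_self, zero_dotProduct, add_sub_cancel] at h1
    have := quadPart_nonneg (D := D) hlam (z - x)
    linarith

lemma exists_solution (hlam : ∀ j, 0 < lam j) (Y : Fin N → ℝ) :
    ∃ x : Fin (P + 1) → Fin N → ℝ,
      (blockH P (fun j => (D j)ᵀ * D j) lam) *ᵥ (fun p => x p.1 p.2) =
        (fun p : Fin (P + 1) × Fin N => Y p.2) := by
  set H := blockH P (fun j => (D j)ᵀ * D j) lam with hH
  by_contra hno
  have hb : (fun p : Fin (P + 1) × Fin N => Y p.2) ∉ LinearMap.range H.mulVecLin := by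
    rintro ⟨v, hv⟩
    exact hno ⟨fun j i => v (j, i), hv⟩
  obtain ⟨f, hfb, hf⟩ := Submodule.exists_le_ker_of_notMem hb
  -- The vector `w` represents `f` with respect to the standard dot product.
  obtain ⟨w, hw⟩ := (dotProductEquiv ℝ (Fin (P + 1) × Fin N)).surjective f
  have hfw : ∀ v, f v = w ⬝ᵥ v := fun v => by rw [← hw]; rfl
  let ω : Fin (P + 1) → Fin N → ℝ := fun j i => w (j, i)
  have h0 : w ⬝ᵥ (H *ᵥ w) = 0 := by
    rw [← hfw]
    exact hf ⟨w, rfl⟩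
  have hq : quadPart P m D lam ω = 0 := by
    rw [dotProduct_comm] at h0
    rw [← h0]
    exact (blockH_bilin ω ω).symm
  apply hfb
  rw [hfw, dotProduct_comm]
  refine (const_dotProduct Y ω).trans ?_
  rw [sum_eq_zero_of_quadPart hlam ω hq, dotProduct_zero]

end

/-- The penalized objective attains its minimum; a point minimizes it iff it solves the normal
equations `H x = (Y; …; Y)`; and the minimizer is unique iff `H` is invertible. -/
theorem objF_min (N P : ℕ) (hN : 1 ≤ N) (hP : 1 ≤ P)
    (m : Fin (P + 1) → ℕ)
    (D : ∀ j : Fin (P + 1), Matrix (Fin (m j)) (Fin N) ℝ)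
    (lam : Fin (P + 1) → ℝ) (hlam : ∀ j, 0 < lam j) (Y : Fin N → ℝ) :
    (∃ x : Fin (P + 1) → Fin N → ℝ, ∀ z, objF P m D lam Y x ≤ objF P m D lam Y z) ∧
    (∀ x : Fin (P + 1) → Fin N → ℝ,
      (∀ z, objF P m D lam Y x ≤ objF P m D lam Y z) ↔
        (blockH P (fun j => (D j)ᵀ * D j) lam) *ᵥ (fun p => x p.1 p.2) =
          (fun p : Fin (P + 1) × Fin N => Y p.2)) ∧
    ((∃! x : Fin (P + 1) → Fin N → ℝ, ∀ z, objF P m D lam Y x ≤ objF P m D lam Y z) ↔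
      IsUnit (blockH P (fun j => (D j)ᵀ * D j) lam)) := by
  obtain ⟨x₀, hx₀⟩ := exists_solution (D := D) hlam Y
  refine ⟨⟨x₀, (isMin_iff hlam Y x₀).mpr hx₀⟩, isMin_iff hlam Y, ?_⟩
  simp only [isMin_iff hlam Y]
  constructor
  · rintro ⟨x, hx, huniq⟩
    rw [← mulVec_injective_iff_isUnit]
    refine (injective_iff_map_eq_zero
      (blockH P (fun j => (D j)ᵀ * D j) lam).mulVecLin).mpr fun v hv => ?_
    have h1 := huniq (x + fun j i => v (j, i)) (by
      have : (fun p : Fin (P + 1) × Fin N => (x + fun j i => v (j, i)) p.1 p.2) =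
          (fun p => x p.1 p.2) + v := rfl
      simp only [this, mulVec_add, hx]
      rw [show _ *ᵥ v = 0 from hv, add_zero])
    have h2 := add_eq_left.mp h1
    ext ⟨j, i⟩
    exact congrFun (congrFun h2 j) i
  · intro hu
    refine ⟨x₀, hx₀, fun y hy => ?_⟩
    have h1 := mulVec_injective_iff_isUnit.mpr hu (hy.trans hx₀.symm)
    ext j i
    exact congrFun h1 (j, i)
end

section
/- Let N ≥ k + 1 with k ≥ 1. The intersection of the kernel of the second-difference operator D_T : ℝ^N → ℝ^{N−2} with the kernel of the seasonal recurrence operator D_k^{rec} : ℝ^N → ℝ^{N−k+1} is the zero subspace {0}. -/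
/-!
A vector in the kernel of the second-difference operator is affine in its index
(`affine_of_secondDiff_eq_zero`). If it also lies in the kernel of the seasonal recurrence
operator, its first two window sums (over `0, …, k-1` and `1, …, k`) vanish; both windows fit
since `k + 1 ≤ N`. Their difference is `x_k - x_0 = 0`, which forces the slope to be zero, so the
vector is constant, and a constant with vanishing sum over `k ≥ 1` terms is zero.
-/

open Matrix

/-- The second-difference operator `(D_T x)_t = x_{t+2} - 2 x_{t+1} + x_t`. -/
noncomputable def secondDiff (N : ℕ) : Matrix (Fin (N - 2)) (Fin N) ℝ :=
  fun t s =>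
    if (s : ℕ) = (t : ℕ) then 1
    else if (s : ℕ) = (t : ℕ) + 1 then -2
    else if (s : ℕ) = (t : ℕ) + 2 then 1 else 0

/-- The seasonal recurrence operator of period `k`: `(D x)_t = x_t + x_{t+1} + ⋯ + x_{t+k-1}`. -/
noncomputable def seasonalRec (N k : ℕ) : Matrix (Fin (N - k + 1)) (Fin N) ℝ :=
  fun t s => if (t : ℕ) ≤ (s : ℕ) ∧ (s : ℕ) < (t : ℕ) + k then 1 else 0

/-- Extension of a vector by zero to a sequence on `ℕ`, so that shifted indices need no bounds. -/
def extendZero {N : ℕ} (x : Fin N → ℝ) (n : ℕ) : ℝ :=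
  if h : n < N then x ⟨n, h⟩ else 0

lemma extendZero_val {N : ℕ} (x : Fin N → ℝ) (s : Fin N) : extendZero x s = x s := by
  simp [extendZero]

lemma secondDiff_mulVec {N : ℕ} (x : Fin N → ℝ) (t : Fin (N - 2)) :
    (secondDiff N *ᵥ x) t =
      extendZero x (t + 2) - 2 * extendZero x (t + 1) + extendZero x t := by
  have ht := t.isLt
  have h1 : (secondDiff N *ᵥ x) t = ∑ n ∈ Finset.range N,
      ((if n = (t : ℕ) then extendZero x n else 0)
        + (if n = (t : ℕ) + 1 then -2 * extendZero x n else 0)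
        + (if n = (t : ℕ) + 2 then extendZero x n else 0)) := by
    rw [Finset.sum_range, mulVec, dotProduct]
    refine Finset.sum_congr rfl fun s _ => ?_
    simp only [secondDiff, extendZero_val]
    split_ifs <;> first | omega | ring
  rw [h1, Finset.sum_add_distrib, Finset.sum_add_distrib,
    Finset.sum_ite_eq', Finset.sum_ite_eq', Finset.sum_ite_eq',
    if_pos (Finset.mem_range.2 (by omega)), if_pos (Finset.mem_range.2 (by omega)),
    if_pos (Finset.mem_range.2 (by omega))]
  ring

lemma seasonalRec_mulVec {N k : ℕ} (hk : k ≤ N) (x : Fin N → ℝ) (t : Fin (N - k + 1)) :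
    (seasonalRec N k *ᵥ x) t = ∑ i ∈ Finset.range k, extendZero x (t + i) := by
  have ht := t.isLt
  have h1 : (seasonalRec N k *ᵥ x) t = ∑ n ∈ Finset.range N,
      if (t : ℕ) ≤ n ∧ n < (t : ℕ) + k then extendZero x n else 0 := by
    rw [Finset.sum_range, mulVec, dotProduct]
    refine Finset.sum_congr rfl fun s _ => ?_
    simp only [seasonalRec, extendZero_val]
    split_ifs <;> ring
  have h2 : (Finset.range N).filter (fun n => (t : ℕ) ≤ n ∧ n < (t : ℕ) + k)
      = Finset.Ico (t : ℕ) (t + k) := by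
    ext n
    simp only [Finset.mem_filter, Finset.mem_range, Finset.mem_Ico]
    omega
  rw [h1, ← Finset.sum_filter, h2, Finset.sum_Ico_eq_sum_range,
    Nat.add_sub_cancel_left]

/-- A sequence whose second differences vanish below `N` is affine below `N`. -/
lemma affine_of_secondDiff_eq_zero {N : ℕ} (f : ℕ → ℝ)
    (hf : ∀ t, t + 2 < N → f (t + 2) - 2 * f (t + 1) + f t = 0) :
    ∀ n, n < N → f n = f 0 + n * (f 1 - f 0) := by
  intro n
  induction n using Nat.twoStepInduction with
  | zero => intro _; simp
  | one => intro _; simp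
  | more n h0 h1 =>
    intro hn
    have h := hf n hn
    rw [h0 (by omega), h1 (by omega)] at h
    push_cast at h ⊢
    linarith

/-- The kernels of the second-difference operator and of the seasonal recurrence operator of
period `k` intersect trivially. -/
theorem ker_secondDiff_inf_seasonalRec (N k : ℕ) (hk : 1 ≤ k) (hN : k + 1 ≤ N) :
    LinearMap.ker (secondDiff N).mulVecLin ⊓ LinearMap.ker (seasonalRec N k).mulVecLin = ⊥ := by
  rw [eq_bot_iff]
  rintro x ⟨hT, hR⟩
  replace hT : secondDiff N *ᵥ x = 0 := hT
  replace hR : seasonalRec N k *ᵥ x = 0 := hR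
  have haff := affine_of_secondDiff_eq_zero (N := N) (extendZero x) fun t ht => by
    rw [← secondDiff_mulVec x ⟨t, by omega⟩, hT, Pi.zero_apply]
  have hS0 : ∑ i ∈ Finset.range k, extendZero x i = 0 := by
    have h := seasonalRec_mulVec (by omega) x (⟨0, by omega⟩ : Fin (N - k + 1))
    simpa [hR] using h.symm
  -- The second window exists because `k + 1 ≤ N`.
  have hS1 : ∑ i ∈ Finset.range k, extendZero x (i + 1) = 0 := by
    have h := seasonalRec_mulVec (by omega) x (⟨1, by omega⟩ : Fin (N - k + 1))
    simpa [hR, add_comm] using h.symm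
  have hk0 : (k : ℝ) ≠ 0 := by positivity
  have hper : extendZero x k = extendZero x 0 := by
    have h := Finset.sum_range_sub (extendZero x) k
    rw [Finset.sum_sub_distrib, hS0, hS1] at h
    linarith
  have hslope : extendZero x 1 - extendZero x 0 = 0 := by
    have h := haff k (by omega)
    have h' : (k : ℝ) * (extendZero x 1 - extendZero x 0) = 0 := by linarith
    exact (mul_eq_zero.1 h').resolve_left hk0
  have hconst : ∀ n < N, extendZero x n = extendZero x 0 := fun n hn => by
    rw [haff n hn, hslope, mul_zero, add_zero]
  have hzero : extendZero x 0 = 0 := by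
    rw [Finset.sum_congr rfl fun i hi => hconst i (by have := Finset.mem_range.1 hi; omega),
      Finset.sum_const, Finset.card_range, nsmul_eq_mul] at hS0
    exact (mul_eq_zero.1 hS0).resolve_left hk0
  rw [Submodule.mem_bot]
  funext s
  rw [← extendZero_val x s, hconst s s.isLt, hzero, Pi.zero_apply]
end

section
/- Let k₁, k₂ ≥ 1 and N ≥ k₁ + k₂. Then the intersection V_{k₁} ∩ V_{k₂} of the subspaces of k₁-periodic and k₂-periodic vectors in ℝ^N equals V_{g}, the subspace of g-periodic vectors, where g = gcd(k₁, k₂); in particular dim(V_{k₁} ∩ V_{k₂}) = gcd(k₁, k₂). -/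
/-!
This is a Fine–Wilf argument. If `x` has periods `a ≤ b` and length `N ≥ a + b`, then it has
period `b - a`: to compare positions `t` and `t + (b - a)`, go up by `b` and down by `a` when
`t + b < N`, and otherwise (then `a ≤ t`) down by `a` and up by `b`. The subtractive Euclidean
algorithm therefore yields the period `gcd a b` (`periodicSub_gcd_of_mem`). The reverse inclusion
holds because a multiple of a period is a period. For the dimension, a `g`-periodic vector is
determined by its first `g` entries, which may be arbitrary when `g ≤ N` (`periodicSubEquiv`).
-/

/-- The subspace `V_k ⊆ ℝ^N` of `k`-periodic vectors. -/
def periodicSub (N k : ℕ) : Submodule ℝ (Fin N → ℝ) where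
  carrier := {x | ∀ (t : ℕ) (h : t + k < N), x ⟨t + k, h⟩ = x ⟨t, by omega⟩}
  add_mem' := by
    intro a b ha hb t h
    simp only [Pi.add_apply, ha t h, hb t h]
  zero_mem' := by intro t h; rfl
  smul_mem' := by
    intro c a ha t h
    simp only [Pi.smul_apply, ha t h, smul_eq_mul]

theorem periodicSub_sub_of_mem {N a b : ℕ} {x : Fin N → ℝ} (hab : a ≤ b) (hN : a + b ≤ N)
    (ha : x ∈ periodicSub N a) (hb : x ∈ periodicSub N b) : x ∈ periodicSub N (b - a) := by
  intro t h
  by_cases htb : t + b < N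
  · have e1 := hb t htb
    have e2 := ha (t + (b - a)) (by omega)
    have e3 : (⟨t + (b - a) + a, by omega⟩ : Fin N) = ⟨t + b, htb⟩ := Fin.ext (by grind)
    rw [← e2, e3, e1]
  · have e1 := ha (t - a) (by omega)
    have e2 := hb (t - a) (by omega)
    have e3 : (⟨t - a + a, by omega⟩ : Fin N) = ⟨t, by omega⟩ := Fin.ext (by grind)
    have e4 : (⟨t - a + b, by omega⟩ : Fin N) = ⟨t + (b - a), h⟩ := Fin.ext (by grind)
    rw [← e3, ← e4, e1, e2]

theorem periodicSub_gcd_of_mem {N : ℕ} {x : Fin N → ℝ} (a b : ℕ) (hN : a + b ≤ N)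
    (ha : x ∈ periodicSub N a) (hb : x ∈ periodicSub N b) :
    x ∈ periodicSub N (Nat.gcd a b) := by
  induction hn : a + b using Nat.strong_induction_on generalizing a b with
  | _ n ih =>
    rcases Nat.eq_zero_or_pos a with rfl | ha0
    · simpa using hb
    rcases Nat.eq_zero_or_pos b with rfl | hb0
    · simpa using ha
    rcases le_total a b with hab | hab
    · have := ih (a + (b - a)) (by omega) a (b - a) (by omega) ha
        (periodicSub_sub_of_mem hab hN ha hb) rfl
      rwa [Nat.gcd_sub_self_right hab] at this
    · have := ih ((a - b) + b) (by omega) (a - b) b (by omega)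
        (periodicSub_sub_of_mem hab (by omega) hb ha) hb rfl
      rwa [Nat.gcd_sub_self_left hab] at this

theorem periodicSub_mul_of_mem {N g : ℕ} {x : Fin N → ℝ} (hx : x ∈ periodicSub N g) (m : ℕ) :
    x ∈ periodicSub N (g * m) := by
  induction m with
  | zero => intro t h; rfl
  | succ m ih =>
    intro t h
    rw [← ih t (by rw [Nat.mul_succ] at h; omega)]
    rw [← hx (t + g * m) (by rw [Nat.mul_succ] at h; omega)]
    exact congrArg x (Fin.ext (by simp only [Nat.mul_succ, Nat.add_assoc]))

theorem periodicSub_apply_mod {N g : ℕ} {x : Fin N → ℝ} (hx : x ∈ periodicSub N g) (i : Fin N) :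
    x ⟨i % g, (Nat.mod_le _ _).trans_lt i.2⟩ = x i := by
  have h := periodicSub_mul_of_mem hx (i / g) (i % g) (by rw [Nat.mod_add_div]; exact i.2)
  rw [← h]
  exact congrArg x (Fin.ext (Nat.mod_add_div _ _))

/-- A `g`-periodic vector corresponds to its restriction to the first `g` coordinates; the inverse
extends a block of length `g` periodically. -/
def periodicSubEquiv {N g : ℕ} (hg : 0 < g) (hgN : g ≤ N) :
    periodicSub N g ≃ₗ[ℝ] (Fin g → ℝ) where
  toFun x i := x.1 (Fin.castLE hgN i)
  map_add' _ _ := rfl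
  map_smul' _ _ := rfl
  invFun y := ⟨fun i => y ⟨i % g, Nat.mod_lt _ hg⟩, fun t h => by simp⟩
  left_inv x := Subtype.ext (funext fun i => periodicSub_apply_mod x.2 i)
  right_inv y := funext fun i => congrArg y (Fin.ext (Nat.mod_eq_of_lt i.2))

/-- The intersection of the subspaces of `k₁`- and `k₂`-periodic vectors in `ℝ^N` is the
subspace of `gcd(k₁,k₂)`-periodic vectors; in particular it has dimension `gcd(k₁,k₂)`. -/
theorem periodic_inf_periodic (N k1 k2 : ℕ) (h1 : 1 ≤ k1) (h2 : 1 ≤ k2) (hN : k1 + k2 ≤ N) :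
    periodicSub N k1 ⊓ periodicSub N k2 = periodicSub N (Nat.gcd k1 k2) ∧
    Module.finrank ℝ ↥(periodicSub N k1 ⊓ periodicSub N k2) = Nat.gcd k1 k2 := by
  have key : periodicSub N k1 ⊓ periodicSub N k2 = periodicSub N (Nat.gcd k1 k2) := by
    apply le_antisymm
    · rintro x ⟨ha, hb⟩
      exact periodicSub_gcd_of_mem k1 k2 hN ha hb
    · intro x hx
      have ha := periodicSub_mul_of_mem hx (k1 / Nat.gcd k1 k2)
      have hb := periodicSub_mul_of_mem hx (k2 / Nat.gcd k1 k2)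
      rw [Nat.mul_div_cancel' (Nat.gcd_dvd_left k1 k2)] at ha
      rw [Nat.mul_div_cancel' (Nat.gcd_dvd_right k1 k2)] at hb
      exact ⟨ha, hb⟩
  refine ⟨key, ?_⟩
  have hle : Nat.gcd k1 k2 ≤ k1 := Nat.gcd_le_left k2 h1
  rw [key, (periodicSubEquiv (Nat.gcd_pos_of_pos_left k2 h1) (by omega)).finrank_eq]
  simp
end

section
/- Let P ≥ 1, let k_1, …, k_P ≥ 1, let N > max_j k_j, let D_0 = D_T be the second-difference operator on ℝ^N, let D_j = D_{k_j}^{diff} be the seasonal differencing operator of period k_j for j = 1, …, P, and let λ_0, …, λ_P > 0. Then the block matrix H is not invertible; indeed the nonzero vector (𝟙, −𝟙, 0, …, 0), with 𝟙 = (1,1,…,1) ∈ ℝ^N, lies in ker H, so the penalized decomposition is not uniquely identifiable. -/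
/-!
Both differencing operators annihilate constants, so every block `A_j = I + λ_j D_jᵀ D_j` fixes
the all-ones vector `𝟙`. Each block of `H` (the off-diagonal ones being identities) therefore has
row sums `1`, and a blockwise constant vector `(c_0 𝟙, …, c_P 𝟙)` is sent to the vector all of
whose entries equal `∑ c_j` (`blockH_mulVec_const`). The choice `c = (1, -1, 0, …, 0)` has sum
zero, which gives a kernel vector; it is nonzero because `N > k_1 ≥ 1`.
-/

open Matrix

/-- The seasonal differencing operator of period `k`: `(D x)_t = x_{t+k} - x_t`. -/
noncomputable def seasonalDiff (N k : ℕ) : Matrix (Fin (N - k)) (Fin N) ℝ :=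
  fun t s =>
    if (s : ℕ) = (t : ℕ) + k then 1
    else if (s : ℕ) = (t : ℕ) then -1 else 0

lemma secondDiff_mulVec_one (N : ℕ) : secondDiff N *ᵥ 1 = 0 := by
  funext t
  have ht := t.isLt
  have h : ∀ s : Fin N, secondDiff N t s =
      (if s = ⟨t, by omega⟩ then 1 else 0) + (if s = ⟨t + 1, by omega⟩ then -2 else 0)
        + (if s = ⟨t + 2, by omega⟩ then 1 else 0) := by
    intro s
    simp only [secondDiff, Fin.ext_iff]
    split_ifs <;> first | omega | norm_num
  simp only [mulVec, dotProduct, h, Pi.one_apply, mul_one, Finset.sum_add_distrib,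
    Finset.sum_ite_eq', Finset.mem_univ, if_true, Pi.zero_apply]
  norm_num

lemma seasonalDiff_mulVec_one (N k : ℕ) (hk : 1 ≤ k) : seasonalDiff N k *ᵥ 1 = 0 := by
  funext t
  have ht := t.isLt
  have h : ∀ s : Fin N, seasonalDiff N k t s =
      (if s = ⟨t + k, by omega⟩ then 1 else 0) + (if s = ⟨t, by omega⟩ then -1 else 0) := by
    intro s
    simp only [seasonalDiff, Fin.ext_iff]
    split_ifs <;> first | omega | norm_num
  simp only [mulVec, dotProduct, h, Pi.one_apply, mul_one, Finset.sum_add_distrib,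
    Finset.sum_ite_eq', Finset.mem_univ, if_true, Pi.zero_apply]
  norm_num

/-- If every `L j` annihilates `𝟙`, then `H` sends the blockwise constant vector with values `c j`
to the constant vector with value `∑ j, c j`. -/
lemma blockH_mulVec_const {N P : ℕ} (L : Fin (P + 1) → Matrix (Fin N) (Fin N) ℝ)
    (lam : Fin (P + 1) → ℝ) (hL : ∀ j, L j *ᵥ 1 = 0) (c : Fin (P + 1) → ℝ) :
    blockH P L lam *ᵥ (fun p => c p.1) = fun _ => ∑ j, c j := by
  funext ⟨i, t⟩
  simp only [mulVec, dotProduct, Fintype.sum_prod_type, ← Finset.sum_mul]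
  refine Finset.sum_congr rfl fun j _ => ?_
  have hrow : ∑ s, blockH P L lam (i, t) (j, s) = 1 := by
    by_cases hij : i = j
    · subst hij
      have h := congrFun (hL i) t
      simp only [mulVec, dotProduct, Pi.one_apply, mul_one, Pi.zero_apply] at h
      simp [blockH, Finset.sum_add_distrib, ← Finset.mul_sum, Matrix.one_apply, h]
    · simp [blockH, hij]
  rw [hrow, one_mul]

/-- With second differencing on the trend and seasonal differencing on each of the `P` seasonal
components, the block matrix `H` is not invertible: the nonzero vector `(𝟙, −𝟙, 0, …, 0)` lies
in its kernel, so the decomposition is not uniquely identifiable. -/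
theorem multiple_seasonality_differencing_not_identifiable (N P : ℕ) (hP : 1 ≤ P)
    (k : Fin P → ℕ) (hk : ∀ i, 1 ≤ k i) (hN : ∀ i, k i < N)
    (lam : Fin (P + 1) → ℝ) (hlam : ∀ j, 0 < lam j) :
    ¬ IsUnit (blockH P
        (Fin.cases ((secondDiff N)ᵀ * secondDiff N)
          (fun i => (seasonalDiff N (k i))ᵀ * seasonalDiff N (k i))) lam) ∧
    (fun p : Fin (P + 1) × Fin N => if p.1 = 0 then (1 : ℝ) else if p.1 = 1 then -1 else 0) ∈
      LinearMap.ker (blockH P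
        (Fin.cases ((secondDiff N)ᵀ * secondDiff N)
          (fun i => (seasonalDiff N (k i))ᵀ * seasonalDiff N (k i))) lam).mulVecLin ∧
    (fun p : Fin (P + 1) × Fin N => if p.1 = 0 then (1 : ℝ) else if p.1 = 1 then -1 else 0) ≠ 0 := by
  have hN0 : 0 < N := lt_of_le_of_lt (Nat.zero_le _) (hN ⟨0, hP⟩)
  have hne : (fun p : Fin (P + 1) × Fin N =>
      if p.1 = 0 then (1 : ℝ) else if p.1 = 1 then -1 else 0) ≠ 0 := by
    intro h
    simpa using congrFun h (0, ⟨0, hN0⟩)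
  have hsum : ∑ j : Fin (P + 1), (if j = 0 then (1 : ℝ) else if j = 1 then -1 else 0) = 0 := by
    obtain ⟨Q, rfl⟩ : ∃ Q, P = Q + 1 := ⟨P - 1, by omega⟩
    rw [Fin.sum_univ_succ, Fin.sum_univ_succ]
    simp [Fin.ext_iff]
  have hmem := blockH_mulVec_const
    (Fin.cases ((secondDiff N)ᵀ * secondDiff N)
      (fun i => (seasonalDiff N (k i))ᵀ * seasonalDiff N (k i))) lam
    (by
      intro j
      refine Fin.cases ?_ (fun i => ?_) j
      · simp only [Fin.cases_zero, ← mulVec_mulVec, secondDiff_mulVec_one, mulVec_zero]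
      · simp only [Fin.cases_succ, ← mulVec_mulVec, seasonalDiff_mulVec_one N (k i) (hk i),
          mulVec_zero])
    (fun j => if j = 0 then (1 : ℝ) else if j = 1 then -1 else 0)
  rw [hsum] at hmem
  refine ⟨fun hu => hne ?_, hmem, hne⟩
  apply Matrix.mulVec_injective_of_isUnit hu
  rw [mulVec_zero]
  exact hmem
end

section
/- Let P ≥ 2, let k_1, …, k_P ≥ 1 with N ≥ max_j k_j + 1, let D_0 = D_T be the second-difference operator on ℝ^N, let D_j = D_{k_j}^{rec} be the seasonal recurrence operator of period k_j for j = 1, …, P, and let λ_0, …, λ_P > 0. If gcd(k_i, k_j) ≥ 2 for some pair 1 ≤ i < j ≤ P, then the block matrix H is not invertible: taking g = gcd(k_i, k_j) and any nonzero g-periodic vector w ∈ ℝ^N whose entries over one period sum to zero, the vector with w in block i, −w in block j, and 0 in all other blocks lies in ker H. -/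
/-!
If `g = gcd (k i) (k j)` and `w` is `g`-periodic with zero sum over a period, then every window of
length `k i` or `k j` is a union of full periods, so both seasonal recurrence operators annihilate
`w` (`seasonalRec_mulVec_eq_zero`). On the vector with `w` in block `i` and `-w` in block `j` the
penalty terms of `H` therefore vanish, and the identity parts of each block row add up to
`w - w = 0` (`blockH_mulVec_pair`). Since `g ≥ 2`, a nonzero such `w` exists
(`exists_periodic_sum_zero`), so `H` has nontrivial kernel and is not invertible.
-/

open Matrix

/-- Applying `blockH` to the vector with `w` in block `a`, `-w` in block `b` gives zero as soon as
`w` is in the kernel of both penalties: the identity parts of all blocks contribute `w - w`. -/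
lemma blockH_mulVec_pair {N P : ℕ} (L : Fin (P + 1) → Matrix (Fin N) (Fin N) ℝ)
    (lam : Fin (P + 1) → ℝ) {a b : Fin (P + 1)} (hab : a ≠ b) (w : Fin N → ℝ)
    (ha : L a *ᵥ w = 0) (hb : L b *ᵥ w = 0) :
    blockH P L lam *ᵥ (fun p : Fin (P + 1) × Fin N =>
      if p.1 = a then w p.2 else if p.1 = b then -w p.2 else 0) = 0 := by
  set v : Fin (P + 1) × Fin N → ℝ := fun p =>
    if p.1 = a then w p.2 else if p.1 = b then -w p.2 else 0 with hv
  funext p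
  obtain ⟨c, s⟩ := p
  have hentry : ∀ q : Fin (P + 1) × Fin N, blockH P L lam (c, s) q * v q =
      (if s = q.2 then v q else 0) + (if c = q.1 then lam c * (L c s q.2 * v q) else 0) := by
    rintro ⟨d, t⟩
    by_cases h1 : c = d <;> by_cases h2 : s = t <;>
      simp [blockH, h1, h2, Matrix.one_apply] <;> ring
  have h1 : ∑ d : Fin (P + 1), v (d, s) = 0 := by
    have : ∀ d, v (d, s) = (if d = a then w s else 0) + (if d = b then -w s else 0) := by
      intro d
      by_cases h : d = a
      · subst h; simp [hv, hab]
      · simp [hv, h]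
    simp [this, Finset.sum_add_distrib]
  have h2 : ∑ t, L c s t * v (c, t) = 0 := by
    by_cases hca : c = a
    · subst hca
      simpa [hv, Matrix.mulVec, dotProduct] using congrFun ha s
    · by_cases hcb : c = b
      · subst hcb
        simpa [hv, hca, Matrix.mulVec, dotProduct] using congrFun hb s
      · simp [hv, hca, hcb]
  simp only [Matrix.mulVec, dotProduct, Pi.zero_apply]
  rw [Finset.sum_congr rfl (fun q _ => hentry q), Finset.sum_add_distrib,
    Fintype.sum_prod_type, Fintype.sum_prod_type]
  have e2 : ∑ d : Fin (P + 1), ∑ t : Fin N,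
      (if c = d then lam c * (L c s t * v (d, t)) else 0) =
        lam c * ∑ t, L c s t * v (c, t) := by
    rw [Finset.sum_eq_single c]
    · simp [Finset.mul_sum]
    · intro d _ hd; simp [Ne.symm hd]
    · simp
  simp only [Finset.sum_ite_eq, Finset.mem_univ, if_true]
  rw [e2, h1, h2]; simp

/-- Any `g` consecutive terms of a `g`-periodic sequence have the same sum as the first `g`, so
windows whose length is a multiple of `g` sum to zero when the first period does. -/
lemma sum_window_eq_zero {g : ℕ} (f : ℕ → ℝ) (hf : ∀ t, f (t + g) = f t)
    (h0 : ∑ i ∈ Finset.range g, f i = 0) (m t : ℕ) :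
    ∑ i ∈ Finset.range (g * m), f (t + i) = 0 := by
  have hone : ∀ t, ∑ i ∈ Finset.range g, f (t + i) = 0 := by
    intro t
    induction t with
    | zero => simpa using h0
    | succ t ih =>
      have h1 := Finset.sum_range_succ (fun i => f (t + i)) g
      have h2 := Finset.sum_range_succ' (fun i => f (t + i)) g
      have h3 : ∀ i, f (t + 1 + i) = f (t + (i + 1)) := fun i => by congr 1; ring
      simp only [h3]
      have := hf t
      simp only [add_zero] at h2
      linarith
  induction m with
  | zero => simp
  | succ m ih =>
    rw [Nat.mul_succ, Finset.sum_range_add, ih, zero_add]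
    simpa [add_assoc] using hone (t + g * m)

lemma periodicSub_apply_mod_s13 {N g : ℕ} (hgN : g ≤ N) (hg : 0 < g) {w : Fin N → ℝ}
    (hw : w ∈ periodicSub N g) (t : ℕ) (ht : t < N) :
    w ⟨t, ht⟩ = w ⟨t % g, (Nat.mod_lt t hg).trans_le hgN⟩ := by
  induction t using Nat.strong_induction_on with
  | _ t ih =>
    by_cases h : t < g
    · simp [Nat.mod_eq_of_lt h]
    · obtain ⟨s, rfl⟩ : ∃ s, t = s + g := ⟨t - g, by omega⟩
      have h1 : w ⟨s + g, ht⟩ = w ⟨s, by omega⟩ := hw s ht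
      rw [h1, ih s (by omega) (by omega)]
      simp

/-- A `g`-periodic vector with zero sum over one period is annihilated by the seasonal recurrence
operator of every period `k` divisible by `g`. -/
lemma seasonalRec_mulVec_eq_zero {N g k : ℕ} (hkN : k ≤ N) (hk : 0 < k) (hgk : g ∣ k)
    {w : Fin N → ℝ} (hw : w ∈ periodicSub N g)
    (hsum : (∑ t : Fin N, if (t : ℕ) < g then w t else 0) = 0) :
    seasonalRec N k *ᵥ w = 0 := by
  have hg : 0 < g := Nat.pos_of_dvd_of_pos hgk hk
  have hgN : g ≤ N := (Nat.le_of_dvd hk hgk).trans hkN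
  -- the periodic extension of `w` to all of `ℕ`
  set f : ℕ → ℝ := fun t => w ⟨t % g, (Nat.mod_lt t hg).trans_le hgN⟩ with hf
  have hwf : ∀ t : Fin N, w t = f t := fun t => periodicSub_apply_mod_s13 hgN hg hw t t.2
  have hper : ∀ t, f (t + g) = f t := fun t => by simp [hf]
  have h0 : ∑ i ∈ Finset.range g, f i = 0 := by
    rw [← hsum]
    simp only [hwf]
    rw [Fin.sum_univ_eq_sum_range (fun t => if t < g then f t else 0) N, ← Finset.sum_filter]
    congr 1
    ext t
    simp only [Finset.mem_range, Finset.mem_filter]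
    omega
  obtain ⟨m, rfl⟩ := hgk
  funext t
  have ht := t.2
  rw [Pi.zero_apply, ← sum_window_eq_zero f hper h0 m t]
  simp only [Matrix.mulVec, dotProduct, seasonalRec, hwf, ite_mul, one_mul, zero_mul]
  rw [Fin.sum_univ_eq_sum_range
    (fun s => if (t : ℕ) ≤ s ∧ s < (t : ℕ) + g * m then f s else 0) N, ← Finset.sum_filter]
  have : (Finset.range N).filter (fun s => (t : ℕ) ≤ s ∧ s < (t : ℕ) + g * m) =
      Finset.Ico (t : ℕ) (t + g * m) := by
    ext s
    simp only [Finset.mem_range, Finset.mem_filter, Finset.mem_Ico]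
    omega
  rw [this, Finset.sum_Ico_eq_sum_range]
  simp

/-- For `2 ≤ g ≤ N`, the `g`-periodic extension of `(1, -1, 0, …, 0)` is a nonzero vector with zero
sum over one period. -/
lemma exists_periodic_sum_zero {N g : ℕ} (hg : 2 ≤ g) (hgN : g ≤ N) :
    ∃ w : Fin N → ℝ, w ≠ 0 ∧ w ∈ periodicSub N g ∧
      (∑ t : Fin N, if (t : ℕ) < g then w t else 0) = 0 := by
  refine ⟨fun t => (if (t : ℕ) % g = 0 then 1 else 0) - (if (t : ℕ) % g = 1 then 1 else 0),
    ?_, ?_, ?_⟩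
  · intro h
    have := congrFun h ⟨0, by omega⟩
    simp at this
  · intro t h
    simp
  · have : ∀ t : Fin N, (if (t : ℕ) < g then
        ((if (t : ℕ) % g = 0 then 1 else 0) - (if (t : ℕ) % g = 1 then 1 else 0) : ℝ) else 0) =
        (if t = ⟨0, by omega⟩ then 1 else 0) - (if t = ⟨1, by omega⟩ then 1 else 0) := by
      intro t
      by_cases h : (t : ℕ) < g
      · simp [h, Nat.mod_eq_of_lt h, Fin.ext_iff]
      · have h0 : (t : ℕ) ≠ 0 := by omega
        have h1 : (t : ℕ) ≠ 1 := by omega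
        simp [h, Fin.ext_iff, h0, h1]
    rw [Finset.sum_congr rfl (fun t _ => this t), Finset.sum_sub_distrib]
    simp

/-- With second differencing on the trend and seasonal recurrence penalties on the `P ≥ 2`
seasonal components, if two seasonal periods have `gcd ≥ 2` then the block matrix `H` is not
invertible: for `g = gcd(k_i, k_j)`, any nonzero `g`-periodic vector `w` whose entries over one
period sum to zero yields the kernel vector with `w` in block `i`, `−w` in block `j`, and `0`
elsewhere. -/
theorem multiple_seasonality_recurrence_not_identifiable (N P : ℕ) (hP : 2 ≤ P)
    (k : Fin P → ℕ) (hk : ∀ i, 1 ≤ k i) (hN : ∀ i, k i + 1 ≤ N)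
    (lam : Fin (P + 1) → ℝ) (hlam : ∀ j, 0 < lam j)
    (i j : Fin P) (hij : i < j) (hg : 2 ≤ Nat.gcd (k i) (k j)) :
    ¬ IsUnit (blockH P
        (Fin.cases ((secondDiff N)ᵀ * secondDiff N)
          (fun l => (seasonalRec N (k l))ᵀ * seasonalRec N (k l))) lam) ∧
    ∀ w : Fin N → ℝ, w ≠ 0 → w ∈ periodicSub N (Nat.gcd (k i) (k j)) →
      (∑ t : Fin N, if (t : ℕ) < Nat.gcd (k i) (k j) then w t else 0) = 0 →
      (fun p : Fin (P + 1) × Fin N =>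
          if p.1 = i.succ then w p.2 else if p.1 = j.succ then -w p.2 else 0) ∈
        LinearMap.ker (blockH P
          (Fin.cases ((secondDiff N)ᵀ * secondDiff N)
            (fun l => (seasonalRec N (k l))ᵀ * seasonalRec N (k l))) lam).mulVecLin := by
  have hker : ∀ w : Fin N → ℝ, w ≠ 0 → w ∈ periodicSub N (Nat.gcd (k i) (k j)) →
      (∑ t : Fin N, if (t : ℕ) < Nat.gcd (k i) (k j) then w t else 0) = 0 →
      blockH P (Fin.cases ((secondDiff N)ᵀ * secondDiff N)
        (fun l => (seasonalRec N (k l))ᵀ * seasonalRec N (k l))) lam *ᵥ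
      (fun p : Fin (P + 1) × Fin N =>
          if p.1 = i.succ then w p.2 else if p.1 = j.succ then -w p.2 else 0) = 0 := by
    intro w _ hw hsum
    have hzero : ∀ l, Nat.gcd (k i) (k j) ∣ k l →
        ((seasonalRec N (k l))ᵀ * seasonalRec N (k l)) *ᵥ w = 0 := fun l hl => by
      rw [← Matrix.mulVec_mulVec,
        seasonalRec_mulVec_eq_zero ((Nat.le_succ _).trans (hN l)) (hk l) hl hw hsum,
        Matrix.mulVec_zero]
    exact blockH_mulVec_pair _ lam (fun h => hij.ne (Fin.succ_injective _ h)) w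
      (hzero i (Nat.gcd_dvd_left _ _)) (hzero j (Nat.gcd_dvd_right _ _))
  refine ⟨fun hunit => ?_, fun w hw0 hw hsum => ?_⟩
  · obtain ⟨w, hw0, hw, hsum⟩ := exists_periodic_sum_zero (N := N) hg
      ((Nat.gcd_le_left _ (hk i)).trans ((Nat.le_succ _).trans (hN i)))
    have hv := Matrix.mulVec_injective_of_isUnit hunit
      ((hker w hw0 hw hsum).trans (Matrix.mulVec_zero _).symm)
    apply hw0
    funext t
    simpa using congrFun hv (i.succ, t)
  · rw [LinearMap.mem_ker, Matrix.mulVecLin_apply]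
    exact hker w hw0 hw hsum
end

section
/- Let P ≥ 1, let k_1, …, k_P ≥ 1 with N ≥ max_j k_j + 1, let D_T be the second-difference operator on ℝ^N, and let D_{k_j}^{rec} be the seasonal recurrence operator of period k_j. Let λ_T > 0 and λ_j^1, λ_j^2 > 0 for j = 1, …, P, and let Y ∈ ℝ^N. Then the objective F(T, S_1, …, S_P) = ‖Y − T − Σ_{j=1}^P S_j‖₂² + λ_T ‖D_T T‖₂² + Σ_{j=1}^P ( λ_j^1 ‖D_T S_j‖₂² + λ_j^2 ‖D_{k_j}^{rec} S_j‖₂² ) has exactly one minimizer over (ℝ^N)^{P+1}. -/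
/-!
The objective is a quadratic function `B x x - 2 * L x + c` on a finite-dimensional space, where
`B` is the symmetric bilinear form `penaltyForm`. Such a function has exactly one minimizer as soon
as `B` is positive definite (`existsUnique_minimizer`): `B` is then nondegenerate, so `L = B x₀` for
some `x₀`, and completing the square gives `F z - F x₀ = B (z - x₀) (z - x₀)`.

Positive definiteness amounts to identifiability (`eq_zero_of_secondDiff_of_seasonalRec`). A vector
killed by the second difference is affine, `a + b t`. Subtracting the first two rows of the
recurrence of period `k` (both exist because `k + 1 ≤ N`) gives `k * b = 0`, and then the first row
gives `k * a = 0`. So every seasonal component vanishes, and the fidelity term kills the trend.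
-/

open Matrix

/-- The penalized objective with a second-difference penalty on the trend and both
second-difference and seasonal-recurrence penalties on each seasonal component. -/
noncomputable def objFRec {N : ℕ} (P : ℕ) (k : Fin P → ℕ) (lamT : ℝ) (lam1 lam2 : Fin P → ℝ)
    (Y : Fin N → ℝ) (x : (Fin N → ℝ) × (Fin P → Fin N → ℝ)) : ℝ :=
  (Y - x.1 - ∑ j, x.2 j) ⬝ᵥ (Y - x.1 - ∑ j, x.2 j)
    + lamT * ((secondDiff N *ᵥ x.1) ⬝ᵥ (secondDiff N *ᵥ x.1))
    + ∑ j, (lam1 j * ((secondDiff N *ᵥ x.2 j) ⬝ᵥ (secondDiff N *ᵥ x.2 j))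
        + lam2 j * ((seasonalRec N (k j) *ᵥ x.2 j) ⬝ᵥ (seasonalRec N (k j) *ᵥ x.2 j)))

theorem existsUnique_minimizer {V : Type*} [AddCommGroup V] [Module ℝ V] [FiniteDimensional ℝ V]
    (B : V →ₗ[ℝ] V →ₗ[ℝ] ℝ) (hsymm : ∀ x y, B x y = B y x) (hnonneg : ∀ x, 0 ≤ B x x)
    (hdef : ∀ x, B x x = 0 → x = 0) (L : V →ₗ[ℝ] ℝ) (c : ℝ) (F : V → ℝ)
    (hF : ∀ x, F x = B x x - 2 * L x + c) :
    ∃! x : V, ∀ z : V, F x ≤ F z := by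
  have hinj : Function.Injective B := by
    rw [injective_iff_map_eq_zero]
    intro x hx
    exact hdef x (by rw [hx]; rfl)
  obtain ⟨x₀, hx₀⟩ :=
    (LinearMap.injective_iff_surjective_of_finrank_eq_finrank
      (Subspace.dual_finrank_eq (K := ℝ) (V := V)).symm).1 hinj L
  have key : ∀ z, F z = F x₀ + B (z - x₀) (z - x₀) := by
    intro z
    simp only [hF, ← hx₀, map_sub, LinearMap.sub_apply, hsymm z x₀]
    ring
  refine ⟨x₀, fun z => ?_, fun y hy => ?_⟩
  · rw [key z]
    linarith [hnonneg (z - x₀)]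
  · have h := hy x₀
    rw [key y] at h
    exact sub_eq_zero.1 (hdef _ (le_antisymm (by linarith) (hnonneg _)))

/-- Extension of a vector by zero to a function on `ℕ`. -/
def zeroExt {N : ℕ} (S : Fin N → ℝ) (n : ℕ) : ℝ := if h : n < N then S ⟨n, h⟩ else 0

theorem zeroExt_coe {N : ℕ} (S : Fin N → ℝ) (i : Fin N) : zeroExt S i = S i := by
  simp [zeroExt]

theorem secondDiff_mulVec_apply {N : ℕ} (S : Fin N → ℝ) (t : Fin (N - 2)) :
    (secondDiff N *ᵥ S) t = zeroExt S (t + 2) - 2 * zeroExt S (t + 1) + zeroExt S t := by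
  have ht := t.2
  have hrow : (secondDiff N *ᵥ S) t = ∑ s : Fin N,
      ((if (s : ℕ) = t then zeroExt S s else 0)
        + (if (s : ℕ) = t + 1 then -2 * zeroExt S s else 0)
        + (if (s : ℕ) = t + 2 then zeroExt S s else 0)) := by
    simp only [mulVec, dotProduct, secondDiff]
    refine Finset.sum_congr rfl fun s _ => ?_
    rw [zeroExt_coe]
    split_ifs <;> first | omega | simp
  rw [hrow, Fin.sum_univ_eq_sum_range (fun s : ℕ =>
      (if s = (t : ℕ) then zeroExt S s else 0)
        + (if s = (t : ℕ) + 1 then -2 * zeroExt S s else 0)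
        + (if s = (t : ℕ) + 2 then zeroExt S s else 0)) N]
  simp only [Finset.sum_add_distrib, Finset.sum_ite_eq', Finset.mem_range]
  rw [if_pos (by omega), if_pos (by omega), if_pos (by omega)]
  ring

theorem seasonalRec_mulVec_apply {N k : ℕ} (hk : k ≤ N) (S : Fin N → ℝ) (t : Fin (N - k + 1)) :
    (seasonalRec N k *ᵥ S) t = ∑ i ∈ Finset.range k, zeroExt S (t + i) := by
  have ht := t.2
  have hrow : (seasonalRec N k *ᵥ S) t = ∑ s : Fin N,
      (if (t : ℕ) ≤ s ∧ (s : ℕ) < t + k then zeroExt S s else 0) := by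
    simp only [mulVec, dotProduct, seasonalRec, zeroExt_coe, ite_mul, one_mul, zero_mul]
  rw [hrow, Fin.sum_univ_eq_sum_range (fun s : ℕ =>
      if (t : ℕ) ≤ s ∧ s < t + k then zeroExt S s else 0) N, ← Finset.sum_filter]
  have hset : (Finset.range N).filter (fun s => (t : ℕ) ≤ s ∧ s < t + k)
      = Finset.Ico (t : ℕ) (t + k) := by
    ext s
    simp only [Finset.mem_filter, Finset.mem_range, Finset.mem_Ico]
    omega
  rw [hset, Finset.sum_Ico_eq_sum_range]
  simp

/-- The second-difference and seasonal-recurrence operators have trivial common kernel. -/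
theorem eq_zero_of_secondDiff_of_seasonalRec {N k : ℕ} (hk : 1 ≤ k) (hN : k + 1 ≤ N)
    (S : Fin N → ℝ) (hD : secondDiff N *ᵥ S = 0) (hR : seasonalRec N k *ᵥ S = 0) : S = 0 := by
  have haff : ∀ n, n + 1 < N →
      zeroExt S n = zeroExt S 0 + n * (zeroExt S 1 - zeroExt S 0) ∧
      zeroExt S (n + 1) = zeroExt S 0 + (n + 1) * (zeroExt S 1 - zeroExt S 0) := by
    intro n
    induction n with
    | zero => intro _; constructor <;> simp
    | succ n ih =>
      intro hn
      obtain ⟨ha, hb⟩ := ih (by omega)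
      have h := congrFun hD ⟨n, by omega⟩
      rw [secondDiff_mulVec_apply] at h
      simp only [Pi.zero_apply] at h
      push_cast
      exact ⟨hb, by linarith⟩
  have hr0 := congrFun hR ⟨0, by omega⟩
  have hr1 := congrFun hR ⟨1, by omega⟩
  rw [seasonalRec_mulVec_apply (by omega)] at hr0 hr1
  simp only [Pi.zero_apply, zero_add] at hr0 hr1
  simp only [Nat.add_comm 1] at hr1
  have hk0 : (k : ℝ) ≠ 0 := by positivity
  -- The difference of the first two rows of the recurrence telescopes to `S_k - S_0`.
  have hends : zeroExt S k = zeroExt S 0 := by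
    have e1 := Finset.sum_range_succ (zeroExt S) k
    have e2 := Finset.sum_range_succ' (zeroExt S) k
    linarith
  have hslope : zeroExt S 1 - zeroExt S 0 = 0 := by
    have h := (haff (k - 1) (by omega)).2
    rw [Nat.sub_add_cancel hk, Nat.cast_sub hk] at h
    push_cast at h
    have h' : (k : ℝ) * (zeroExt S 1 - zeroExt S 0) = 0 := by linarith
    exact (mul_eq_zero.1 h').resolve_left hk0
  have hconst : ∀ n, n < N → zeroExt S n = zeroExt S 0 := by
    intro n hn
    rcases n with _ | n
    · rfl
    · rw [(haff n hn).2, hslope]; ring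
  have hzero : zeroExt S 0 = 0 := by
    rw [Finset.sum_congr rfl fun i hi => hconst i (by have := Finset.mem_range.1 hi; omega)] at hr0
    simp only [Finset.sum_const, Finset.card_range, nsmul_eq_mul] at hr0
    exact (mul_eq_zero.1 hr0).resolve_left hk0
  ext i
  rw [← zeroExt_coe S i, hconst i i.2, hzero, Pi.zero_apply]

/-- The pullback of the dot product along a linear map, `(x, y) ↦ A x ⬝ᵥ A y`. -/
noncomputable def gramForm {V : Type*} [AddCommGroup V] [Module ℝ V] {m : ℕ}
    (A : V →ₗ[ℝ] (Fin m → ℝ)) : V →ₗ[ℝ] V →ₗ[ℝ] ℝ :=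
  LinearMap.compl₁₂ (dotProductBilin ℝ ℝ) A A

theorem gramForm_apply {V : Type*} [AddCommGroup V] [Module ℝ V] {m : ℕ}
    (A : V →ₗ[ℝ] (Fin m → ℝ)) (x y : V) : gramForm A x y = A x ⬝ᵥ A y := rfl

/-- The fitted signal `(T, S) ↦ T + ∑ j, S j`. -/
noncomputable def fitted (N P : ℕ) : ((Fin N → ℝ) × (Fin P → Fin N → ℝ)) →ₗ[ℝ] (Fin N → ℝ) :=
  LinearMap.fst ℝ _ _ + ∑ j, LinearMap.proj j ∘ₗ LinearMap.snd ℝ _ _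

theorem fitted_apply {N P : ℕ} (x : (Fin N → ℝ) × (Fin P → Fin N → ℝ)) :
    fitted N P x = x.1 + ∑ j, x.2 j := by
  simp [fitted, LinearMap.sum_apply]

/-- The bilinear form whose quadratic form is the second-degree part of the objective. -/
noncomputable def penaltyForm (N P : ℕ) (k : Fin P → ℕ) (lamT : ℝ) (lam1 lam2 : Fin P → ℝ) :
    ((Fin N → ℝ) × (Fin P → Fin N → ℝ)) →ₗ[ℝ] ((Fin N → ℝ) × (Fin P → Fin N → ℝ)) →ₗ[ℝ] ℝ :=
  gramForm (fitted N P)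
    + lamT • gramForm ((secondDiff N).mulVecLin ∘ₗ LinearMap.fst ℝ _ _)
    + ∑ j, (lam1 j • gramForm
          ((secondDiff N).mulVecLin ∘ₗ LinearMap.proj j ∘ₗ LinearMap.snd ℝ _ _)
        + lam2 j • gramForm
          ((seasonalRec N (k j)).mulVecLin ∘ₗ LinearMap.proj j ∘ₗ LinearMap.snd ℝ _ _))

theorem penaltyForm_apply {N P : ℕ} (k : Fin P → ℕ) (lamT : ℝ) (lam1 lam2 : Fin P → ℝ)
    (x y : (Fin N → ℝ) × (Fin P → Fin N → ℝ)) :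
    penaltyForm N P k lamT lam1 lam2 x y =
      fitted N P x ⬝ᵥ fitted N P y
        + lamT * ((secondDiff N *ᵥ x.1) ⬝ᵥ (secondDiff N *ᵥ y.1))
        + ∑ j, (lam1 j * ((secondDiff N *ᵥ x.2 j) ⬝ᵥ (secondDiff N *ᵥ y.2 j))
          + lam2 j * ((seasonalRec N (k j) *ᵥ x.2 j) ⬝ᵥ (seasonalRec N (k j) *ᵥ y.2 j))) := by
  simp [penaltyForm, gramForm_apply, LinearMap.sum_apply]

theorem dotProduct_self_nonneg_real_s18 {m : ℕ} (v : Fin m → ℝ) : 0 ≤ v ⬝ᵥ v :=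
  Finset.sum_nonneg fun i _ => mul_self_nonneg (v i)

/-- **Mixed differencing with recurrence.** With a second-difference penalty on the trend and
both second-difference and seasonal-recurrence penalties on each seasonal component, the
penalized objective has exactly one minimizer over `(ℝ^N)^{P+1}`. -/
theorem mixed_recurrence_identifiable (N P : ℕ) (hP : 1 ≤ P)
    (k : Fin P → ℕ) (hk : ∀ j, 1 ≤ k j) (hN : ∀ j, k j + 1 ≤ N)
    (lamT : ℝ) (hT : 0 < lamT) (lam1 lam2 : Fin P → ℝ)
    (h1 : ∀ j, 0 < lam1 j) (h2 : ∀ j, 0 < lam2 j) (Y : Fin N → ℝ) :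
    ∃! x : (Fin N → ℝ) × (Fin P → Fin N → ℝ),
      ∀ z : (Fin N → ℝ) × (Fin P → Fin N → ℝ),
        objFRec P k lamT lam1 lam2 Y x ≤ objFRec P k lamT lam1 lam2 Y z := by
  have hnnT : ∀ v : Fin N → ℝ, 0 ≤ lamT * ((secondDiff N *ᵥ v) ⬝ᵥ (secondDiff N *ᵥ v)) :=
    fun v => mul_nonneg hT.le (dotProduct_self_nonneg_real_s18 _)
  have hnn1 : ∀ j (v : Fin N → ℝ), 0 ≤ lam1 j * ((secondDiff N *ᵥ v) ⬝ᵥ (secondDiff N *ᵥ v)) :=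
    fun j v => mul_nonneg (h1 j).le (dotProduct_self_nonneg_real_s18 _)
  have hnn2 : ∀ j (v : Fin N → ℝ),
      0 ≤ lam2 j * ((seasonalRec N (k j) *ᵥ v) ⬝ᵥ (seasonalRec N (k j) *ᵥ v)) :=
    fun j v => mul_nonneg (h2 j).le (dotProduct_self_nonneg_real_s18 _)
  refine existsUnique_minimizer (penaltyForm N P k lamT lam1 lam2) (fun x y => ?_) (fun x => ?_)
    (fun x hx => ?_) (dotProductBilin ℝ ℝ Y ∘ₗ fitted N P) (Y ⬝ᵥ Y) _ (fun x => ?_)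
  · simp only [penaltyForm_apply]
    rw [dotProduct_comm (fitted N P x), dotProduct_comm (secondDiff N *ᵥ x.1)]
    congr 1
    refine Finset.sum_congr rfl fun j _ => ?_
    rw [dotProduct_comm (secondDiff N *ᵥ x.2 j), dotProduct_comm (seasonalRec N (k j) *ᵥ x.2 j)]
  · rw [penaltyForm_apply]
    exact add_nonneg (add_nonneg (dotProduct_self_nonneg_real_s18 _) (hnnT _))
      (Finset.sum_nonneg fun j _ => add_nonneg (hnn1 j _) (hnn2 j _))
  · rw [penaltyForm_apply] at hx
    have hfit := dotProduct_self_nonneg_real_s18 (fitted N P x)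
    have hsum := Finset.sum_nonneg fun j (_ : j ∈ Finset.univ) =>
      add_nonneg (hnn1 j (x.2 j)) (hnn2 j (x.2 j))
    have hsum0 := le_antisymm (by linarith [hnnT x.1]) hsum
    have hfit0 : fitted N P x = 0 :=
      dotProduct_self_eq_zero.1 (le_antisymm (by linarith [hnnT x.1]) hfit)
    have hS : ∀ j, x.2 j = 0 := by
      intro j
      have hj := (Finset.sum_eq_zero_iff_of_nonneg fun j _ =>
        add_nonneg (hnn1 j (x.2 j)) (hnn2 j (x.2 j))).1 hsum0 j (Finset.mem_univ j)
      obtain ⟨hj1, hj2⟩ := (add_eq_zero_iff_of_nonneg (hnn1 j _) (hnn2 j _)).1 hj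
      exact eq_zero_of_secondDiff_of_seasonalRec (hk j) (hN j) _
        (dotProduct_self_eq_zero.1 ((mul_eq_zero.1 hj1).resolve_left (h1 j).ne'))
        (dotProduct_self_eq_zero.1 ((mul_eq_zero.1 hj2).resolve_left (h2 j).ne'))
    rw [fitted_apply] at hfit0
    simp only [hS, Finset.sum_const_zero, add_zero] at hfit0
    exact Prod.ext hfit0 (funext hS)
  · have hL : (dotProductBilin ℝ ℝ Y ∘ₗ fitted N P) x = Y ⬝ᵥ fitted N P x := rfl
    rw [hL, penaltyForm_apply, objFRec, sub_sub, ← fitted_apply]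
    simp only [sub_dotProduct, dotProduct_sub, dotProduct_comm (fitted N P x) Y]
    ring
end
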